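/- Let G, Q be groups and ρ: G → Q a surjective group homomorphism. Then the diagonal subgroup Δ_G is a normal subgroup of G ×_Q G if and only if ker ρ ⊆ Z(G), the center of G. -/

import Mathlib

/-- The fibre product `G ×_Q G` of a surjective group homomorphism `ρ : G → Q`
with itself, as a subgroup of `G × G`. -/
def fiberProduct {G Q : Type*} [Group G] [Group Q] (ρ : G →* Q) : Subgroup (G × G) where
  carrier := {p | ρ p.1 = ρ p.2}
  one_mem' := rfl
  mul_mem' := by
    intro a b ha hb
    simp only [Set.mem_setOf_eq, Prod.fst_mul, Prod.snd_mul, map_mul] at *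
    rw [ha, hb]
  inv_mem' := by
    intro a ha
    simp only [Set.mem_setOf_eq, Prod.fst_inv, Prod.snd_inv, map_inv] at *
    rw [ha]

/-- The diagonal subgroup `Δ_G` of `G × G`. -/
def diagSubgroup (G : Type*) [Group G] : Subgroup (G × G) where
  carrier := {p | p.1 = p.2}
  one_mem' := rfl
  mul_mem' := by
    intro a b ha hb
    simp only [Set.mem_setOf_eq, Prod.fst_mul, Prod.snd_mul] at *
    rw [ha, hb]
  inv_mem' := by
    intro a ha
    simp only [Set.mem_setOf_eq, Prod.fst_inv, Prod.snd_inv] at *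
    rw [ha]

/-- For a surjective group homomorphism `ρ : G → Q`, the diagonal
subgroup `Δ_G` is normal in `G ×_Q G` if and only if `ker ρ ⊆ Z(G)`. -/
theorem stmt10 {G Q : Type*} [Group G] [Group Q] (ρ : G →* Q)
    (hρ : Function.Surjective ρ) :
    ((diagSubgroup G).subgroupOf (fiberProduct ρ)).Normal ↔
      ρ.ker ≤ Subgroup.center G := by
  constructor
  · intro h k hk
    rw [Subgroup.mem_center_iff]
    intro g
    have hk1 : ((k, 1) : G × G) ∈ fiberProduct ρ :=
      show ρ k = ρ 1 from (MonoidHom.mem_ker.mp hk).trans (map_one ρ).symm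
    have hgg : ((g, g) : G × G) ∈ fiberProduct ρ := show ρ g = ρ g from rfl
    have hconj : k * g * k⁻¹ = 1 * g * 1⁻¹ :=
      h.conj_mem ⟨(g, g), hgg⟩ (show g = g from rfl) ⟨(k, 1), hk1⟩
    rw [one_mul, inv_one, mul_one, mul_inv_eq_iff_eq_mul] at hconj
    exact hconj.symm
  · intro h
    refine ⟨?_⟩
    rintro ⟨⟨g, g'⟩, _⟩ hg ⟨⟨x, y⟩, hxy⟩
    obtain rfl : g = g' := hg
    replace hxy : ρ x = ρ y := hxy
    have hker : y⁻¹ * x ∈ ρ.ker := by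
      rw [MonoidHom.mem_ker, map_mul, map_inv, hxy, inv_mul_cancel]
    have hcomm : g * (y⁻¹ * x) = y⁻¹ * x * g := Subgroup.mem_center_iff.mp (h hker) g
    show x * g * x⁻¹ = y * g * y⁻¹
    calc x * g * x⁻¹ = y * (y⁻¹ * x * g) * x⁻¹ := by group
      _ = y * (g * (y⁻¹ * x)) * x⁻¹ := by rw [hcomm]
      _ = y * g * y⁻¹ := by group
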